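/- arXiv:1710.07233 — 5 statements merged into one kernel-verified Lean document; each statement's English description precedes it below -/
import Mathlib

section
/- There exists a constant C = C(n,β) > 0 such that the following holds. Let 0 < β < n, let f : ℝⁿ → [0,∞) be a nonnegative, continuously differentiable, integrable radial function, let x ∈ ℝⁿ \ {0}, suppose M_β f is real-valued in a neighborhood of x and differentiable at x, and let B = B(z,r) ∈ ℬ_x be a best ball at x with r ≤ |x|/4. Define E := { y ∈ B(z,2r) : (1/2) ⨍_B f ≤ f(y) ≤ 2 ⨍_B f }. Then | ⨍_B ∇f(y) dy | ≤ C(n,β) ⨍_{B(z,2r)} |∇f(y)| χ_E(y) dy. -/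
open MeasureTheory Metric Filter
open scoped Topology

noncomputable section

/-- The set of competitor values for the non-centered fractional maximal function at `x`:
values `r ^ β ⨍_{B(z,r)} |f|` over all open balls `B(z,r)` whose closure contains `x`. -/
def maxSet {n : ℕ} (β : ℝ) (f : EuclideanSpace ℝ (Fin n) → ℝ)
    (x : EuclideanSpace ℝ (Fin n)) : Set ℝ :=
  {t | ∃ z : EuclideanSpace ℝ (Fin n), ∃ r : ℝ, 0 < r ∧ x ∈ closedBall z r ∧
    t = r ^ β * ⨍ y in ball z r, |f y|}

/-- The non-centered fractional maximal function `M_β f`. -/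
def fracMax {n : ℕ} (β : ℝ) (f : EuclideanSpace ℝ (Fin n) → ℝ)
    (x : EuclideanSpace ℝ (Fin n)) : ℝ :=
  sSup (maxSet β f x)

/-- `B(z,r)` is a best ball at `x` for `M_β f`, i.e. `B(z,r) ∈ ℬ_x`. -/
def IsBestBall {n : ℕ} (β : ℝ) (f : EuclideanSpace ℝ (Fin n) → ℝ)
    (x z : EuclideanSpace ℝ (Fin n)) (r : ℝ) : Prop :=
  0 < r ∧ x ∈ closedBall z r ∧ fracMax β f x = r ^ β * ⨍ y in ball z r, |f y|

/-!
Write `a` for the average of `f` over the best ball `B(z, r)`. Since `B(z + v, r + ‖v‖)` contains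
both `x` and a translate of `B(z, r)`, optimality bounds the integral of `f` over `B(z, r) + v` by
`(1 + ‖v‖ / r) ^ d` times the integral over `B(z, r)`, where `d` is the dimension; differentiating
at `v = 0` gives `‖⨍ ∇f‖ ≤ (d / r) a`. It remains to bound `a / r` by the average of `|∇f|` over the
level set. Comparing with `B(z, 3r/2)`, optimality forces `f` to take there both a value at least
`a` and a value at most `κ a`, where `κ < 1` depends only on `β`. As `f` is radial and `z` is far
from the origin, `f` therefore sweeps through `[κ a, a]` on every line parallel to `z` passing near
`z`, so that `∫ |∇f|` over the part of each such line where `κ a ≤ f ≤ a` is at least `(1 - κ) a`;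
integrate over the lines.
-/

section RealLine

lemma hasDerivWithinAt_Ioi_le_of_eventually_le {g h : ℝ → ℝ} {g' h' a : ℝ}
    (hg : HasDerivWithinAt g g' (Set.Ioi a) a) (hh : HasDerivWithinAt h h' (Set.Ioi a) a)
    (heq : g a = h a) (hle : ∀ᶠ t in 𝓝[>] a, g t ≤ h t) : g' ≤ h' := by
  rw [hasDerivWithinAt_iff_tendsto_slope' Set.self_notMem_Ioi] at hg hh
  refine le_of_tendsto_of_tendsto hg hh ?_
  filter_upwards [hle, self_mem_nhdsWithin] with t ht (hat : a < t)
  rw [slope_def_field, slope_def_field, heq]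
  have : 0 < t - a := sub_pos.2 hat
  gcongr

lemma volume_image_le_lintegral_enorm_deriv {u u' : ℝ → ℝ} {s : Set ℝ} (hs : MeasurableSet s)
    (hu : ∀ t ∈ s, HasDerivWithinAt u (u' t) s t) :
    volume (u '' s) ≤ ∫⁻ t in s, ‖u' t‖ₑ := by
  simpa only [ContinuousLinearMap.det_toSpanSingleton, ← Real.enorm_eq_ofReal_abs] using
    addHaar_image_le_lintegral_abs_det_fderiv volume hs fun t ht ↦ (hu t ht).hasFDerivWithinAt

lemma volume_le_lintegral_enorm_deriv_of_subset_image {u u' : ℝ → ℝ} {s I : Set ℝ}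
    (hs : MeasurableSet s) (hI : MeasurableSet I) (hu : ∀ t, HasDerivAt u (u' t) t)
    (hIs : I ⊆ u '' s) : volume I ≤ ∫⁻ t in s ∩ u ⁻¹' I, ‖u' t‖ₑ := by
  have hcont : Continuous u := continuous_iff_continuousAt.2 fun t ↦ (hu t).continuousAt
  calc volume I = volume (u '' (s ∩ u ⁻¹' I)) := by
        rw [Set.image_inter_preimage, Set.inter_eq_right.2 hIs]
    _ ≤ ∫⁻ t in s ∩ u ⁻¹' I, ‖u' t‖ₑ :=
        volume_image_le_lintegral_enorm_deriv (hs.inter (hcont.measurable hI))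
          fun t _ ↦ (hu t).hasDerivWithinAt

end RealLine

section Integrals

lemma integrableOn_ball_of_continuous {E F : Type*} [MetricSpace E] [ProperSpace E]
    [MeasurableSpace E] [OpensMeasurableSpace E] [NormedAddCommGroup F]
    {μ : Measure E} [IsFiniteMeasureOnCompacts μ] {g : E → F} (hg : Continuous g)
    (z : E) (r : ℝ) : IntegrableOn g (ball z r) μ :=
  (hg.continuousOn.integrableOn_compact (isCompact_closedBall z r)).mono_set ball_subset_closedBall

lemma measureReal_ball_pos {E : Type*} [PseudoMetricSpace E] [ProperSpace E] [MeasurableSpace E]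
    (μ : Measure E) [IsFiniteMeasureOnCompacts μ] [μ.IsOpenPosMeasure] (z : E) {r : ℝ}
    (hr : 0 < r) : 0 < μ.real (ball z r) :=
  ENNReal.toReal_pos (measure_ball_pos μ z hr).ne' measure_ball_lt_top.ne

lemma setAverage_mul_indicator_one {α : Type*} [MeasurableSpace α] (μ : Measure α) (g : α → ℝ)
    (s : Set α) {t : Set α} (ht : MeasurableSet t) :
    ⨍ y in s, g y * t.indicator (fun _ ↦ (1 : ℝ)) y ∂μ =
      (μ.real s)⁻¹ * ∫ y in s ∩ t, g y ∂μ := by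
  rw [setAverage_eq, smul_eq_mul, ← setIntegral_indicator ht]
  simp only [← Set.indicator_mul_right, mul_one]

lemma setIntegral_ball_comp_add_right {E F : Type*} [NormedAddCommGroup E] [MeasurableSpace E]
    [BorelSpace E] {μ : Measure E} [μ.IsAddRightInvariant] [NormedAddCommGroup F] [NormedSpace ℝ F]
    (g : E → F) (z v : E) (r : ℝ) :
    ∫ y in ball z r, g (y + v) ∂μ = ∫ y in ball (z + v) r, g y ∂μ := by
  have hpre : (· + v) ⁻¹' ball (z + v) r = ball z r := by
    rw [preimage_add_right_ball, add_sub_cancel_right]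
  rw [← hpre]
  exact (measurePreserving_add_right μ v).setIntegral_preimage_emb
    (measurableEmbedding_addRight v) g _

end Integrals

section Gradient

variable {F : Type*} [NormedAddCommGroup F] [InnerProductSpace ℝ F] [CompleteSpace F]

lemma norm_gradient_eq_norm_fderiv (f : F → ℝ) (x : F) : ‖gradient f x‖ = ‖fderiv ℝ f x‖ :=
  (InnerProductSpace.toDual ℝ F).symm.norm_map _

lemma norm_average_gradient_eq_norm_average_fderiv [MeasurableSpace F] {μ : Measure F}
    {f : F → ℝ} (hf : Integrable (fderiv ℝ f) μ) :
    ‖⨍ y, gradient f y ∂μ‖ = ‖⨍ y, fderiv ℝ f y ∂μ‖ := by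
  let L := (InnerProductSpace.toDual ℝ F).symm
  have hL : ∫ y, gradient f y ∂μ = L (∫ y, fderiv ℝ f y ∂μ) :=
    ContinuousLinearMap.integral_comp_commSL (by simp)
      (L.toContinuousLinearEquiv : StrongDual ℝ F →L⋆[ℝ] F) hf
  rw [average_eq, average_eq, norm_smul, norm_smul, hL, L.norm_map]

end Gradient

section FiniteDimensional

variable {E : Type*} [NormedAddCommGroup E] [NormedSpace ℝ E] [FiniteDimensional ℝ E]
  [MeasurableSpace E] [BorelSpace E] {μ : Measure E}

lemma hasFDerivAt_setIntegral_ball_comp_add {F : Type*} [NormedAddCommGroup F] [NormedSpace ℝ F]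
    [IsFiniteMeasureOnCompacts μ] {f : E → F} (hf : ContDiff ℝ 1 f) (z : E) (r : ℝ) :
    HasFDerivAt (fun v ↦ ∫ y in ball z r, f (y + v) ∂μ) (∫ y in ball z r, fderiv ℝ f y ∂μ) 0 := by
  have hf' : Continuous (fderiv ℝ f) := hf.continuous_fderiv one_ne_zero
  obtain ⟨A, hA⟩ := (isCompact_closedBall z (r + 1)).exists_bound_of_continuousOn hf'.continuousOn
  have hbound : ∀ y ∈ ball z r, ∀ v ∈ closedBall (0 : E) 1, ‖fderiv ℝ f (y + v)‖ ≤ A := by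
    intro y hy v hv
    have hyv : dist (y + v) (z + 0) ≤ r + 1 :=
      (dist_add_add_le _ _ _ _).trans (add_le_add (mem_ball.1 hy).le hv)
    exact hA _ (by simpa using hyv)
  have key := hasFDerivAt_integral_of_dominated_of_fderiv_le (μ := μ.restrict (ball z r))
    (F := fun v y ↦ f (y + v)) (F' := fun v y ↦ fderiv ℝ f (y + v)) (bound := fun _ ↦ A)
    (closedBall_mem_nhds 0 one_pos)
    (Eventually.of_forall fun v ↦
      (integrableOn_ball_of_continuous (by fun_prop) z r).aestronglyMeasurable)
    (integrableOn_ball_of_continuous (by fun_prop) z r)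
    (integrableOn_ball_of_continuous (by fun_prop) z r).aestronglyMeasurable
    ((ae_restrict_iff' measurableSet_ball).2 (ae_of_all _ hbound))
    (integrableOn_ball_of_continuous continuous_const z r)
    (ae_of_all _ fun y v _ ↦
      (hasFDerivAt_comp_add_left y).2 (hf.differentiable one_ne_zero (y + v)).hasFDerivAt)
  simpa only [add_zero] using key

variable [μ.IsAddHaarMeasure]

lemma measureReal_ball_mul (z : E) {c : ℝ} (hc : 0 < c) (r : ℝ) :
    μ.real (ball z (c * r)) = c ^ Module.finrank ℝ E * μ.real (ball z r) := by
  rw [Measure.addHaar_real_ball_center μ z r, measureReal_def, measureReal_def,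
    Measure.addHaar_ball_mul_of_pos μ z hc, ENNReal.toReal_mul,
    ENNReal.toReal_ofReal (by positivity)]

variable {f : E → ℝ}

-- One-dimensional area inequality along each line, then Tonelli and translation invariance.
lemma volume_mul_measure_le_volume_mul_lintegral_fderiv (hf : Differentiable ℝ f) {e : E}
    (he : ‖e‖ ≤ 1) {A U : Set E} {T I : Set ℝ} (hA : MeasurableSet A) (hU : MeasurableSet U)
    (hT : MeasurableSet T) (hI : MeasurableSet I) (hAU : ∀ q ∈ A, ∀ t ∈ T, q + t • e ∈ U)
    (hAI : ∀ q ∈ A, I ⊆ (fun t : ℝ ↦ f (q + t • e)) '' T) :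
    volume I * μ A ≤ volume T * ∫⁻ y in U ∩ f ⁻¹' I, ‖fderiv ℝ f y‖ₑ ∂μ := by
  have hmeas : MeasurableSet (U ∩ f ⁻¹' I) := hU.inter (hf.continuous.measurable hI)
  let g : E → ENNReal := (U ∩ f ⁻¹' I).indicator fun y ↦ ‖fderiv ℝ f y‖ₑ
  have hg : Measurable g := (measurable_fderiv ℝ f).enorm.indicator hmeas
  have hline : ∀ q ∈ A, volume I ≤ ∫⁻ t in T, g (q + t • e) := by
    intro q hq
    have hderiv (t : ℝ) : HasDerivAt (fun t : ℝ ↦ f (q + t • e)) (fderiv ℝ f (q + t • e) e) t := by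
      refine (hf _).hasFDerivAt.comp_hasDerivAt t ?_
      simpa using ((hasDerivAt_id t).smul_const e).const_add q
    have hcont : Continuous fun t : ℝ ↦ f (q + t • e) := hf.continuous.comp (by fun_prop)
    calc volume I ≤ ∫⁻ t in T ∩ (fun t : ℝ ↦ f (q + t • e)) ⁻¹' I, ‖fderiv ℝ f (q + t • e) e‖ₑ :=
          volume_le_lintegral_enorm_deriv_of_subset_image hT hI hderiv (hAI q hq)
      _ ≤ ∫⁻ t in T ∩ (fun t : ℝ ↦ f (q + t • e)) ⁻¹' I, g (q + t • e) := by
          refine setLIntegral_mono' (hT.inter (hcont.measurable hI)) fun t ht ↦ ?_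
          have hmem : q + t • e ∈ U ∩ f ⁻¹' I := ⟨hAU q hq t ht.1, ht.2⟩
          rw [show g (q + t • e) = ‖fderiv ℝ f (q + t • e)‖ₑ from Set.indicator_of_mem hmem _]
          exact enorm_le_iff_norm_le.2 (ContinuousLinearMap.unit_le_opNorm _ _ he)
      _ ≤ ∫⁻ t in T, g (q + t • e) := lintegral_mono_set Set.inter_subset_left
  calc volume I * μ A = ∫⁻ _ in A, volume I ∂μ := (setLIntegral_const _ _).symm
    _ ≤ ∫⁻ q in A, (∫⁻ t in T, g (q + t • e)) ∂μ := setLIntegral_mono' hA hline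
    _ = ∫⁻ t in T, (∫⁻ q in A, g (q + t • e) ∂μ) :=
        lintegral_lintegral_swap (hg.comp (by fun_prop)).aemeasurable
    _ ≤ ∫⁻ _ in T, (∫⁻ y, g y ∂μ) :=
        lintegral_mono fun t ↦ (setLIntegral_le_lintegral _ _).trans_eq
          (lintegral_add_right_eq_self g (t • e))
    _ = volume T * ∫⁻ y in U ∩ f ⁻¹' I, ‖fderiv ℝ f y‖ₑ ∂μ := by
        rw [setLIntegral_const, lintegral_indicator hmeas, mul_comm]

end FiniteDimensional

section Radial

variable {E : Type*} [NormedAddCommGroup E] [NormedSpace ℝ E] {z : E} {ρ δ : ℝ}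

lemma norm_add_smul_inv_norm_smul_self (hz : z ≠ 0) {t : ℝ} (ht : -‖z‖ ≤ t) :
    ‖z + t • ‖z‖⁻¹ • z‖ = ‖z‖ + t := by
  have hz' : ‖z‖ ≠ 0 := norm_ne_zero_iff.2 hz
  have hcol : z + t • ‖z‖⁻¹ • z = ((‖z‖ + t) * ‖z‖⁻¹) • z := by
    rw [add_mul, mul_inv_cancel₀ hz', add_smul, one_smul, mul_smul]
  rw [hcol, norm_smul, norm_mul, norm_inv, norm_norm, inv_mul_cancel_right₀ hz',
    Real.norm_of_nonneg (by linarith)]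

-- Along the line `‖·‖` is continuous and takes all values in `[‖z‖ - ρ, ‖z‖ + ρ]`.
lemma image_closedBall_subset_image_line {α : Type*} {f : E → α}
    (hf : ∀ x y : E, ‖x‖ = ‖y‖ → f x = f y) (hz : z ≠ 0) (hδ : 0 ≤ δ) (hρ : 0 ≤ ρ)
    (hρδ : ρ + δ ≤ ‖z‖) {q : E} (hq : q ∈ closedBall z δ) :
    f '' closedBall z ρ ⊆
      (fun t : ℝ ↦ f (q + t • ‖z‖⁻¹ • z)) '' Set.Icc (-(ρ + δ)) (ρ + δ) := by
  rintro _ ⟨y, hy, rfl⟩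
  rw [mem_closedBall, dist_eq_norm] at hy hq
  have hshift (t : ℝ) (ht : -‖z‖ ≤ t) : |‖q + t • ‖z‖⁻¹ • z‖ - (‖z‖ + t)| ≤ δ := by
    rw [← norm_add_smul_inv_norm_smul_self hz ht]
    exact (abs_norm_sub_norm_le _ _).trans (by rwa [add_sub_add_right_eq_sub])
  have hlower := (abs_le.1 (hshift (-(ρ + δ)) (by linarith))).2
  have hupper := (abs_le.1 (hshift (ρ + δ) (by linarith))).1
  have hnorm := abs_le.1 ((abs_norm_sub_norm_le y z).trans hy)
  have hcont : ContinuousOn (fun t : ℝ ↦ ‖q + t • ‖z‖⁻¹ • z‖) (Set.Icc (-(ρ + δ)) (ρ + δ)) := by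
    fun_prop
  obtain ⟨t, ht, hty⟩ := intermediate_value_Icc (by linarith) hcont
    (show ‖y‖ ∈ Set.Icc _ _ from ⟨by linarith, by linarith⟩)
  exact ⟨t, ht, hf _ _ hty⟩

lemma volumeReal_mul_measureReal_ball_le_setIntegral_norm_fderiv [FiniteDimensional ℝ E]
    [MeasurableSpace E] [BorelSpace E] (μ : Measure E) [μ.IsAddHaarMeasure] {f : E → ℝ}
    (hf : ContDiff ℝ 1 f) (hrad : ∀ x y : E, ‖x‖ = ‖y‖ → f x = f y) (hz : z ≠ 0) (hδ : 0 ≤ δ)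
    (hρ : 0 ≤ ρ) (hρδ : ρ + δ ≤ ‖z‖) {I : Set ℝ} (hI : MeasurableSet I)
    (hIf : I ⊆ f '' closedBall z ρ) :
    volume.real I * μ.real (ball z δ) ≤
      2 * (ρ + δ) * ∫ y in ball z (ρ + 2 * δ) ∩ f ⁻¹' I, ‖fderiv ℝ f y‖ ∂μ := by
  have hunit : ‖‖z‖⁻¹ • z‖ = 1 := norm_smul_inv_norm hz
  have hline : ∀ q ∈ ball z δ, ∀ t ∈ Set.Icc (-(ρ + δ)) (ρ + δ),
      q + t • ‖z‖⁻¹ • z ∈ ball z (ρ + 2 * δ) := by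
    intro q hq t ht
    have ht' : ‖t • ‖z‖⁻¹ • z‖ ≤ ρ + δ := by
      rw [norm_smul, hunit, mul_one]
      exact abs_le.2 ht
    calc dist (q + t • ‖z‖⁻¹ • z) z ≤ dist (q + t • ‖z‖⁻¹ • z) q + dist q z := dist_triangle _ _ _
      _ < ρ + 2 * δ := by rw [dist_self_add_left]; linarith [mem_ball.1 hq]
  have hlines := volume_mul_measure_le_volume_mul_lintegral_fderiv (μ := μ)
    (hf.differentiable one_ne_zero) hunit.le measurableSet_ball measurableSet_ball
    measurableSet_Icc hI hline fun q hq ↦ hIf.trans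
      (image_closedBall_subset_image_line hrad hz hδ hρ hρδ (ball_subset_closedBall hq))
  have hint : IntegrableOn (fderiv ℝ f) (ball z (ρ + 2 * δ) ∩ f ⁻¹' I) μ :=
    (integrableOn_ball_of_continuous (hf.continuous_fderiv one_ne_zero) z _).mono_set
      Set.inter_subset_left
  have hreal := ENNReal.toReal_mono
    (ENNReal.mul_ne_top measure_Icc_lt_top.ne hint.hasFiniteIntegral.ne) hlines
  rw [ENNReal.toReal_mul, ENNReal.toReal_mul, ← integral_norm_eq_lintegral_enorm hint.1,
    ← measureReal_def, ← measureReal_def, ← measureReal_def,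
    Real.volume_real_Icc_of_le (by linarith)] at hreal
  linarith

end Radial

/-- `B(z, r)` maximizes `s ^ β ⨍_{B(w,s)} f` among all balls whose closure contains `x`. For `f ≥ 0`
this is the notion of best ball at `x`, in any metric measure space; it is phrased without a
supremum, so that no junk value of `sSup` can occur. -/
structure IsOptimalBall {E : Type*} [PseudoMetricSpace E] [MeasurableSpace E] (μ : Measure E)
    (β : ℝ) (f : E → ℝ) (x z : E) (r : ℝ) : Prop where
  radius_pos : 0 < r
  mem_closedBall : x ∈ closedBall z r
  rpow_mul_setAverage_le : ∀ w s, 0 < s → x ∈ closedBall w s →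
    s ^ β * ⨍ y in ball w s, f y ∂μ ≤ r ^ β * ⨍ y in ball z r, f y ∂μ

lemma IsBestBall.isOptimalBall {n : ℕ} {β : ℝ} {f : EuclideanSpace ℝ (Fin n) → ℝ}
    {x z : EuclideanSpace ℝ (Fin n)} {r : ℝ} (h : IsBestBall β f x z r) (hf : ∀ y, 0 ≤ f y)
    (hbdd : BddAbove (maxSet β f x)) : IsOptimalBall volume β f x z r := by
  obtain ⟨hr, hx, hmax⟩ := h
  refine ⟨hr, hx, fun w s hs hxw ↦ ?_⟩
  have hle : s ^ β * (⨍ y in ball w s, |f y|) ≤ fracMax β f x :=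
    le_csSup hbdd ⟨w, s, hs, hxw, rfl⟩
  simpa only [hmax, abs_of_nonneg (hf _)] using hle

namespace IsOptimalBall

lemma setAverage_le {E : Type*} [PseudoMetricSpace E] [MeasurableSpace E] {μ : Measure E} {β : ℝ}
    {f : E → ℝ} {x z w : E} {r s : ℝ} (h : IsOptimalBall μ β f x z r) (hs : 0 < s)
    (hx : x ∈ closedBall w s) :
    ⨍ y in ball w s, f y ∂μ ≤ (r / s) ^ β * ⨍ y in ball z r, f y ∂μ := by
  rw [Real.div_rpow h.radius_pos.le hs.le, div_mul_eq_mul_div, le_div_iff₀' (by positivity)]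
  exact h.rpow_mul_setAverage_le w s hs hx

variable {E : Type*} [NormedAddCommGroup E] [NormedSpace ℝ E] [FiniteDimensional ℝ E]
  [MeasurableSpace E] [BorelSpace E] {μ : Measure E} [μ.IsAddHaarMeasure] {β : ℝ} {f : E → ℝ}
  {x z : E} {r : ℝ}

lemma setIntegral_comp_add_right_le (h : IsOptimalBall μ β f x z r) (hβ : 0 ≤ β)
    (hf : ∀ y, 0 ≤ f y) (hfc : Continuous f) (v : E) :
    ∫ y in ball z r, f (y + v) ∂μ ≤
      ((r + ‖v‖) / r) ^ Module.finrank ℝ E * ∫ y in ball z r, f y ∂μ := by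
  have hr := h.radius_pos
  have hs : 0 < r + ‖v‖ := by positivity
  have hx : x ∈ closedBall (z + v) (r + ‖v‖) := by
    refine (dist_triangle x z (z + v)).trans (add_le_add h.mem_closedBall ?_)
    rw [dist_self_add_right]
  have hratio : (r / (r + ‖v‖)) ^ β ≤ 1 :=
    Real.rpow_le_one (by positivity) (div_le_one_of_le₀ (by simp) hs.le) hβ
  have havg : ⨍ y in ball (z + v) (r + ‖v‖), f y ∂μ ≤ ⨍ y in ball z r, f y ∂μ :=
    (h.setAverage_le hs hx).trans (mul_le_of_le_one_left (integral_nonneg hf) hratio)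
  have hmeas : μ.real (ball (z + v) (r + ‖v‖)) =
      ((r + ‖v‖) / r) ^ Module.finrank ℝ E * μ.real (ball z r) := by
    rw [← measureReal_ball_mul z (by positivity), div_mul_cancel₀ _ hr.ne',
      Measure.addHaar_real_ball_center, Measure.addHaar_real_ball_center μ z]
  calc ∫ y in ball z r, f (y + v) ∂μ = ∫ y in ball (z + v) r, f y ∂μ :=
        setIntegral_ball_comp_add_right f z v r
    _ ≤ ∫ y in ball (z + v) (r + ‖v‖), f y ∂μ :=
        setIntegral_mono_set (integrableOn_ball_of_continuous hfc _ _) (ae_of_all _ hf)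
          (ball_subset_ball (by simp)).eventuallyLE
    _ = μ.real (ball (z + v) (r + ‖v‖)) * ⨍ y in ball (z + v) (r + ‖v‖), f y ∂μ :=
        (measure_smul_setAverage f measure_ball_lt_top.ne).symm
    _ ≤ μ.real (ball (z + v) (r + ‖v‖)) * ⨍ y in ball z r, f y ∂μ := by gcongr
    _ = ((r + ‖v‖) / r) ^ Module.finrank ℝ E * ∫ y in ball z r, f y ∂μ := by
        rw [hmeas, mul_assoc, ← smul_eq_mul (μ.real _),
          measure_smul_setAverage f measure_ball_lt_top.ne]

lemma setIntegral_fderiv_apply_le (h : IsOptimalBall μ β f x z r) (hβ : 0 ≤ β)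
    (hf : ∀ y, 0 ≤ f y) (hf1 : ContDiff ℝ 1 f) (v : E) :
    (∫ y in ball z r, fderiv ℝ f y ∂μ) v ≤
      Module.finrank ℝ E / r * (∫ y in ball z r, f y ∂μ) * ‖v‖ := by
  have hr := h.radius_pos
  have hshift : HasDerivAt (fun t : ℝ ↦ ∫ y in ball z r, f (y + t • v) ∂μ)
      ((∫ y in ball z r, fderiv ℝ f y ∂μ) v) 0 := by
    refine HasFDerivAt.comp_hasDerivAt_of_eq 0 (hasFDerivAt_setIntegral_ball_comp_add hf1 z r) ?_
      (zero_smul ℝ v).symm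
    simpa using (hasDerivAt_id (0 : ℝ)).smul_const v
  have hdilate : HasDerivAt
      (fun t : ℝ ↦ ((r + t * ‖v‖) / r) ^ Module.finrank ℝ E * ∫ y in ball z r, f y ∂μ)
      (Module.finrank ℝ E / r * (∫ y in ball z r, f y ∂μ) * ‖v‖) 0 := by
    have hbase : HasDerivAt (fun t : ℝ ↦ (r + t * ‖v‖) / r) (‖v‖ / r) 0 := by
      simpa using (((hasDerivAt_id (0 : ℝ)).mul_const ‖v‖).const_add r).div_const r
    refine ((hbase.pow (Module.finrank ℝ E)).mul_const _).congr_deriv ?_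
    rw [zero_mul, add_zero, div_self hr.ne', one_pow]
    ring
  refine hasDerivWithinAt_Ioi_le_of_eventually_le hshift.hasDerivWithinAt
    hdilate.hasDerivWithinAt ?_ ?_
  · simp [hr.ne']
  · filter_upwards [self_mem_nhdsWithin] with t (ht : 0 < t)
    simpa only [norm_smul, Real.norm_of_nonneg ht.le] using
      h.setIntegral_comp_add_right_le hβ hf hf1.continuous (t • v)

lemma norm_setAverage_fderiv_le (h : IsOptimalBall μ β f x z r) (hβ : 0 ≤ β)
    (hf : ∀ y, 0 ≤ f y) (hf1 : ContDiff ℝ 1 f) :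
    ‖⨍ y in ball z r, fderiv ℝ f y ∂μ‖ ≤
      Module.finrank ℝ E / r * ⨍ y in ball z r, f y ∂μ := by
  have hr := h.radius_pos
  have hint : ‖∫ y in ball z r, fderiv ℝ f y ∂μ‖ ≤
      Module.finrank ℝ E / r * ∫ y in ball z r, f y ∂μ := by
    refine ContinuousLinearMap.opNorm_le_bound _
      (mul_nonneg (by positivity) (integral_nonneg hf)) fun v ↦ abs_le'.2 ⟨?_, ?_⟩
    · exact h.setIntegral_fderiv_apply_le hβ hf hf1 v
    · simpa only [map_neg, norm_neg] using h.setIntegral_fderiv_apply_le hβ hf hf1 (-v)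
  rw [setAverage_eq, setAverage_eq, norm_smul, norm_inv, Real.norm_of_nonneg measureReal_nonneg,
    smul_eq_mul, mul_left_comm]
  gcongr

lemma Icc_subset_image_closedBall (h : IsOptimalBall μ β f x z r) (hf : ∀ y, 0 ≤ f y)
    (hfc : Continuous f) {κ : ℝ} (hκ : (2 / 3) ^ β ≤ κ) :
    Set.Icc (κ * ⨍ y in ball z r, f y ∂μ) (⨍ y in ball z r, f y ∂μ) ⊆
      f '' closedBall z (3 / 2 * r) := by
  have hr := h.radius_pos
  have hr' : 0 < 3 / 2 * r := by positivity
  obtain ⟨y₁, hy₁, hfy₁⟩ := exists_setAverage_le (measure_ball_pos μ z hr).ne'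
    measure_ball_lt_top.ne (integrableOn_ball_of_continuous hfc z r)
  obtain ⟨y₂, hy₂, hfy₂⟩ := exists_le_setAverage (measure_ball_pos μ z hr').ne'
    measure_ball_lt_top.ne (integrableOn_ball_of_continuous hfc z (3 / 2 * r))
  have hlow : f y₂ ≤ κ * ⨍ y in ball z r, f y ∂μ := by
    refine (hfy₂.trans (h.setAverage_le hr'
      (closedBall_subset_closedBall (by linarith) h.mem_closedBall))).trans ?_
    rw [show r / (3 / 2 * r) = 2 / 3 by field_simp]
    exact mul_le_mul_of_nonneg_right hκ (integral_nonneg hf)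
  exact (Set.Icc_subset_Icc hlow hfy₁).trans
    ((convex_closedBall z _).isPreconnected.intermediate_value (ball_subset_closedBall hy₂)
      (ball_subset_closedBall (ball_subset_ball (by linarith) hy₁)) hfc.continuousOn)

-- Sweep `B(z, 3r/2)` by the lines through `B(z, r/4)`: these stay in `B(z, 3r/2 + 2 (r/4))`.
lemma one_sub_mul_setAverage_le (h : IsOptimalBall μ β f x z r) (hf : ∀ y, 0 ≤ f y)
    (hf1 : ContDiff ℝ 1 f) (hrad : ∀ y w : E, ‖y‖ = ‖w‖ → f y = f w) (hrx : r ≤ ‖x‖ / 4)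
    {κ : ℝ} (hκ : (2 / 3) ^ β ≤ κ) :
    (1 - κ) * ⨍ y in ball z r, f y ∂μ ≤
      7 / 2 * 8 ^ Module.finrank ℝ E * r * ((μ.real (ball z (2 * r)))⁻¹ *
        ∫ y in ball z (2 * r) ∩
          f ⁻¹' Set.Icc (κ * ⨍ u in ball z r, f u ∂μ) (⨍ u in ball z r, f u ∂μ),
          ‖fderiv ℝ f y‖ ∂μ) := by
  have hr := h.radius_pos
  have hz : 3 * r ≤ ‖z‖ := by
    have hxz := norm_sub_norm_le x z
    have := mem_closedBall_iff_norm.1 h.mem_closedBall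
    linarith
  have hosc := volumeReal_mul_measureReal_ball_le_setIntegral_norm_fderiv μ hf1 hrad
    (norm_pos_iff.1 (by linarith)) (by positivity : 0 ≤ r / 4) (by positivity) (by linarith)
    measurableSet_Icc (h.Icc_subset_image_closedBall hf hf1.continuous hκ)
  set a := ⨍ y in ball z r, f y ∂μ
  have hball : μ.real (ball z (2 * r)) = 8 ^ Module.finrank ℝ E * μ.real (ball z (r / 4)) := by
    rw [← measureReal_ball_mul z (by norm_num)]
    ring_nf
  have hpos := measureReal_ball_pos μ z (by positivity : 0 < r / 4)
  rw [show 3 / 2 * r + 2 * (r / 4) = 2 * r by ring, Real.volume_real_Icc] at hosc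
  calc (1 - κ) * a ≤ max (a - κ * a) 0 := by
        rw [sub_mul, one_mul]
        exact le_max_left _ _
    _ ≤ 2 * (3 / 2 * r + r / 4) * (∫ y in ball z (2 * r) ∩ f ⁻¹' Set.Icc (κ * a) a,
          ‖fderiv ℝ f y‖ ∂μ) / μ.real (ball z (r / 4)) := (le_div_iff₀ hpos).2 hosc
    _ = _ := by
        rw [hball]
        field_simp
        ring

lemma one_sub_mul_setAverage_le_setAverage_indicator (h : IsOptimalBall μ β f x z r)
    (hf : ∀ y, 0 ≤ f y) (hf1 : ContDiff ℝ 1 f) (hrad : ∀ y w : E, ‖y‖ = ‖w‖ → f y = f w)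
    (hrx : r ≤ ‖x‖ / 4) {κ c : ℝ} (hκ : (2 / 3) ^ β ≤ κ) (hκc : c ≤ κ) {C : ℝ} (hC : 1 ≤ C) :
    (1 - κ) * ⨍ y in ball z r, f y ∂μ ≤
      7 / 2 * 8 ^ Module.finrank ℝ E * r * ⨍ y in ball z (2 * r), ‖fderiv ℝ f y‖ *
        Set.indicator
          {w | w ∈ ball z (2 * r) ∧ c * (⨍ u in ball z r, f u ∂μ) ≤ f w ∧
            f w ≤ C * ⨍ u in ball z r, f u ∂μ}
          (fun _ ↦ (1 : ℝ)) y ∂μ := by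
  have hr := h.radius_pos
  refine (h.one_sub_mul_setAverage_le hf hf1 hrad hrx hκ).trans ?_
  set a := ⨍ y in ball z r, f y ∂μ
  have ha : 0 ≤ a := integral_nonneg hf
  have hf' : Continuous (fderiv ℝ f) := hf1.continuous_fderiv one_ne_zero
  rw [setAverage_mul_indicator_one]
  swap
  · exact measurableSet_ball.inter
      (hf1.continuous.measurable (measurableSet_Icc (a := c * a) (b := C * a)))
  gcongr ?_ * (?_ * ?_)
  refine setIntegral_mono_set ((integrableOn_ball_of_continuous hf'.norm z _).mono_set
    Set.inter_subset_left) (ae_of_all _ fun _ ↦ norm_nonneg _) (LE.le.eventuallyLE ?_)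
  rintro y ⟨hy, hκy, hya⟩
  exact ⟨hy, hy, (mul_le_mul_of_nonneg_right hκc ha).trans hκy,
    hya.trans (le_mul_of_one_le_left ha hC)⟩

end IsOptimalBall

theorem stmt11_general {E : Type*} [NormedAddCommGroup E] [NormedSpace ℝ E]
    [FiniteDimensional ℝ E] [MeasurableSpace E] [BorelSpace E] (μ : Measure E)
    [μ.IsAddHaarMeasure] {β : ℝ} (hβ : 0 < β) :
    ∃ C : ℝ, 0 < C ∧
      ∀ f : E → ℝ, (∀ x, 0 ≤ f x) → ContDiff ℝ 1 f → (∀ x y : E, ‖x‖ = ‖y‖ → f x = f y) →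
        ∀ (x z : E) (r : ℝ), IsOptimalBall μ β f x z r → r ≤ ‖x‖ / 4 →
        ‖⨍ y in ball z r, fderiv ℝ f y ∂μ‖ ≤
          C * ⨍ y in ball z (2 * r), ‖fderiv ℝ f y‖ *
            Set.indicator
              {w | w ∈ ball z (2 * r) ∧
                (1 / 2) * (⨍ u in ball z r, f u ∂μ) ≤ f w ∧
                f w ≤ 2 * ⨍ u in ball z r, f u ∂μ}
              (fun _ => (1 : ℝ)) y ∂μ := by
  let κ : ℝ := max (1 / 2) ((2 / 3) ^ β)
  have hκ : 0 < 1 - κ :=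
    sub_pos.2 (max_lt (by norm_num) (Real.rpow_lt_one (by norm_num) (by norm_num) hβ))
  refine ⟨(Module.finrank ℝ E + 1) * (7 / 2 * 8 ^ Module.finrank ℝ E) / (1 - κ), by positivity,
    fun f hf hf1 hrad x z r h hrx ↦ ?_⟩
  have hr := h.radius_pos
  have hosc := h.one_sub_mul_setAverage_le_setAverage_indicator hf hf1 hrad hrx
    (le_max_right (1 / 2) _) (le_max_left _ _) one_le_two
  set J := ⨍ y in ball z (2 * r), ‖fderiv ℝ f y‖ * Set.indicator _ _ y ∂μ
  have ha : 0 ≤ ⨍ y in ball z r, f y ∂μ := integral_nonneg hf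
  calc ‖⨍ y in ball z r, fderiv ℝ f y ∂μ‖
      ≤ Module.finrank ℝ E / r * ⨍ y in ball z r, f y ∂μ := h.norm_setAverage_fderiv_le hβ.le hf hf1
    _ ≤ (Module.finrank ℝ E + 1) / r * ⨍ y in ball z r, f y ∂μ := by gcongr; linarith
    _ ≤ (Module.finrank ℝ E + 1) / r * (7 / 2 * 8 ^ Module.finrank ℝ E * r * J / (1 - κ)) := by
        gcongr
        exact (le_div_iff₀' hκ).2 hosc
    _ = (Module.finrank ℝ E + 1) * (7 / 2 * 8 ^ Module.finrank ℝ E) / (1 - κ) * J := by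
        field_simp

theorem stmt11 (n : ℕ) (hn : 1 ≤ n) (β : ℝ) (hβ0 : 0 < β) (hβn : β < n) :
    ∃ C : ℝ, 0 < C ∧
      ∀ (f : EuclideanSpace ℝ (Fin n) → ℝ), (∀ x, 0 ≤ f x) → ContDiff ℝ 1 f →
        Integrable f →
        (∀ x y : EuclideanSpace ℝ (Fin n), ‖x‖ = ‖y‖ → f x = f y) →
        ∀ (x : EuclideanSpace ℝ (Fin n)), x ≠ 0 →
        (∀ᶠ y in 𝓝 x, BddAbove (maxSet β f y)) →
        DifferentiableAt ℝ (fracMax β f) x →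
        ∀ (z : EuclideanSpace ℝ (Fin n)) (r : ℝ), IsBestBall β f x z r →
        r ≤ ‖x‖ / 4 →
        ‖⨍ y in ball z r, gradient f y‖ ≤
          C * ⨍ y in ball z (2 * r), ‖gradient f y‖ *
            Set.indicator
              {w | w ∈ ball z (2 * r) ∧
                (1 / 2) * (⨍ u in ball z r, f u) ≤ f w ∧
                f w ≤ 2 * ⨍ u in ball z r, f u}
              (fun _ => (1 : ℝ)) y := by
  obtain ⟨C, hC, hmain⟩ := stmt11_general (E := EuclideanSpace ℝ (Fin n)) volume hβ0
  refine ⟨C, hC, fun f hf0 hf _ hrad x _ hbdd _ z r hB hrx ↦ ?_⟩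
  have h := hmain f hf0 hf hrad x z r (hB.isOptimalBall hf0 hbdd.self_of_nhds) hrx
  simpa only [norm_gradient_eq_norm_fderiv, norm_average_gradient_eq_norm_average_fderiv
    (integrableOn_ball_of_continuous (hf.continuous_fderiv one_ne_zero) z r)] using h
end
end

section
/- Let n ≥ 1, 0 ≤ β < n, let f : ℝⁿ → ℝ be an integrable radial function, let x ∈ ℝⁿ \ {0}, and suppose M_β f is real-valued in a neighborhood of x and of −x and is differentiable at both x and −x. If there exist c < 0 and r > 0 such that B(c·x, r) is a best ball at x (i.e. B(c·x, r) ∈ ℬ_x), then ∇M_β f(x) = 0. -/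
open MeasureTheory Metric Filter
open scoped Topology

noncomputable section

/-!
If `f` is invariant under a linear isometry `e`, then so is `M_β f`. Suppose that a best ball at `x`
contains `e x` in its interior. For `y` near `x` the ball still contains `e y`, so
`M_β f y = M_β f (e y)` is at least the value of the ball, which is `M_β f x`: thus `x` is a local
minimum. For radial `f` take `e = -1`: a closed ball centred at `c • x` with `c < 0` that contains
`x` contains `-x`, which is strictly closer to the centre, in its interior.
-/

theorem setAverage_preimage_of_measurePreserving {α γ F : Type*} [MeasurableSpace α]
    [MeasurableSpace γ] [NormedAddCommGroup F] [NormedSpace ℝ F] {μ : Measure α} {ν : Measure γ}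
    {φ : α → γ} (hφ : MeasurePreserving φ μ ν) (hφe : MeasurableEmbedding φ)
    (g : γ → F) (s : Set γ) :
    ⨍ a in φ ⁻¹' s, g (φ a) ∂μ = ⨍ b in s, g b ∂ν := by
  rw [setAverage_eq, setAverage_eq, hφ.setIntegral_preimage_emb hφe, measureReal_def,
    measureReal_def, hφ.measure_preimage_emb hφe]

theorem setAverage_ball_map_linearIsometryEquiv {E E' F : Type*}
    [NormedAddCommGroup E] [InnerProductSpace ℝ E] [FiniteDimensional ℝ E]
    [MeasurableSpace E] [BorelSpace E]
    [NormedAddCommGroup E'] [InnerProductSpace ℝ E'] [FiniteDimensional ℝ E']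
    [MeasurableSpace E'] [BorelSpace E']
    [NormedAddCommGroup F] [NormedSpace ℝ F] (e : E ≃ₗᵢ[ℝ] E') (g : E' → F) (z : E) (r : ℝ) :
    ⨍ y in ball (e z) r, g y = ⨍ y in ball z r, g (e y) := by
  rw [← setAverage_preimage_of_measurePreserving e.measurePreserving
    e.toHomeomorph.measurableEmbedding, e.preimage_ball, e.symm_apply_apply]

theorem neg_mem_ball_smul_of_mem_closedBall {E : Type*} [NormedAddCommGroup E] [NormedSpace ℝ E]
    {x : E} (hx : x ≠ 0) {c r : ℝ} (hc : c < 0) (hmem : x ∈ closedBall (c • x) r) :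
    -x ∈ ball (c • x) r := by
  have habs : |-1 - c| < |1 - c| := sq_lt_sq.mp (by nlinarith)
  rw [mem_ball, dist_eq_norm]
  calc ‖-x - c • x‖ = |-1 - c| * ‖x‖ := by
        rw [← Real.norm_eq_abs, ← norm_smul, sub_smul, neg_one_smul]
    _ < |1 - c| * ‖x‖ := mul_lt_mul_of_pos_right habs (norm_pos_iff.mpr hx)
    _ = dist x (c • x) := by
        rw [← Real.norm_eq_abs, ← norm_smul, sub_smul, one_smul, dist_eq_norm]
    _ ≤ r := hmem

section FracMax

variable {n : ℕ} {β : ℝ} {f : EuclideanSpace ℝ (Fin n) → ℝ} {x z : EuclideanSpace ℝ (Fin n)}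
  {r : ℝ}

theorem le_fracMax (hbdd : BddAbove (maxSet β f x)) (hr : 0 < r) (hx : x ∈ closedBall z r) :
    r ^ β * ⨍ y in ball z r, |f y| ≤ fracMax β f x :=
  le_csSup hbdd ⟨z, r, hr, hx, rfl⟩

variable {e : EuclideanSpace ℝ (Fin n) ≃ₗᵢ[ℝ] EuclideanSpace ℝ (Fin n)}

theorem maxSet_map_linearIsometryEquiv (β : ℝ) (hf : ∀ y, f (e y) = f y)
    (x : EuclideanSpace ℝ (Fin n)) : maxSet β f (e x) = maxSet β f x :=
  Set.ext fun _ => e.surjective.exists.trans <| by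
    simp only [mem_closedBall, e.dist_map, setAverage_ball_map_linearIsometryEquiv, hf, maxSet,
      Set.mem_ofPred_eq]

theorem fracMax_map_linearIsometryEquiv (β : ℝ) (hf : ∀ y, f (e y) = f y)
    (x : EuclideanSpace ℝ (Fin n)) : fracMax β f (e x) = fracMax β f x := by
  rw [fracMax, fracMax, maxSet_map_linearIsometryEquiv β hf]

theorem IsBestBall.isLocalMin_fracMax (hB : IsBestBall β f x z r) (hf : ∀ y, f (e y) = f y)
    (hbdd : ∀ᶠ y in 𝓝 x, BddAbove (maxSet β f y)) (hex : e x ∈ ball z r) :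
    IsLocalMin (fracMax β f) x := by
  obtain ⟨hr, -, hval⟩ := hB
  have hball : ∀ᶠ y in 𝓝 x, e y ∈ ball z r :=
    e.continuous.continuousAt.eventually_mem (isOpen_ball.mem_nhds hex)
  filter_upwards [hbdd, hball] with y hy hey
  calc fracMax β f x = r ^ β * ⨍ y in ball z r, |f y| := hval
    _ ≤ fracMax β f (e y) :=
        le_fracMax (by rwa [maxSet_map_linearIsometryEquiv β hf]) hr (ball_subset_closedBall hey)
    _ = fracMax β f y := fracMax_map_linearIsometryEquiv β hf y

theorem stmt13_general (_hfi : LocallyIntegrable f) (hf : ∀ y, f (e y) = f y)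
    (hbdd : ∀ᶠ y in 𝓝 x, BddAbove (maxSet β f y)) (hdiff : DifferentiableAt ℝ (fracMax β f) x)
    (hB : IsBestBall β f x z r) (hex : e x ∈ ball z r) :
    HasGradientAt (fracMax β f) 0 x := by
  have hmin : IsLocalMin (fracMax β f) x := hB.isLocalMin_fracMax hf hbdd hex
  rw [hasGradientAt_iff_hasFDerivAt, map_zero, ← hmin.fderiv_eq_zero]
  exact hdiff.hasFDerivAt

end FracMax

theorem stmt13 (n : ℕ) (hn : 1 ≤ n) (β : ℝ) (hβ0 : 0 ≤ β) (hβn : β < n)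
    (f : EuclideanSpace ℝ (Fin n) → ℝ) (hfi : Integrable f)
    (hrad : ∀ x y : EuclideanSpace ℝ (Fin n), ‖x‖ = ‖y‖ → f x = f y)
    (x : EuclideanSpace ℝ (Fin n)) (hx : x ≠ 0)
    (hfin : ∀ᶠ y in 𝓝 x, BddAbove (maxSet β f y))
    (hfin' : ∀ᶠ y in 𝓝 (-x), BddAbove (maxSet β f y))
    (hdiff : DifferentiableAt ℝ (fracMax β f) x)
    (hdiff' : DifferentiableAt ℝ (fracMax β f) (-x))
    (c r : ℝ) (hc : c < 0) (hr : 0 < r)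
    (hB : IsBestBall β f x (c • x) r) :
    gradient (fracMax β f) x = 0 :=
  (stmt13_general (e := .neg ℝ) hfi.locallyIntegrable (fun y => hrad _ _ (norm_neg y)) hfin hdiff
    hB (neg_mem_ball_smul_of_mem_closedBall hx hc hB.2.1)).gradient
end
end

section
/- There exists a constant C = C(n) > 0 such that the following holds. Let E ⊂ ℝⁿ \ {0} be a measurable set, let c : E → ℝ be a measurable function with c(x) > 5/4 for all x ∈ E, and for x ∈ E set B_x := B(c(x)·x, (c(x) − 1)|x|). Then for every y ∈ ℝⁿ \ {0} one has ∫_E χ_{B_x}(y) / |B_x| dx ≤ C(n). In particular, if |x| > |y| and x ∈ E then y ∉ B_x, and if y ∈ B_x with x ∈ E and |x| ≤ |y| then the radius of B_x is at least |y|/8. -/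
open MeasureTheory Metric Filter
open scoped Topology

noncomputable section

/- If `y ∈ B(t x, (t - 1)|x|)`, the triangle inequality through the centre gives
`|x| < |y| < (2t - 1)|x|`. So for `t ≥ κ > 1` the point `x` lies in the ball of radius `|y|` about
the origin while the radius of `B(t x, (t - 1)|x|)` is at least `ρ = (κ - 1)/(2κ - 1) * |y|`.
The integrand is therefore at most `1/|B(0, ρ)|` and supported in `B(0, |y|)`, and its
integral is at most `(|y|/ρ)^n`, independently of `y`. -/

section Geometry

variable {F : Type*} [SeminormedAddCommGroup F] [NormedSpace ℝ F] {x y : F} {t κ : ℝ}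

lemma norm_lt_norm_of_mem_ball_smul (hy : y ∈ ball (t • x) ((t - 1) * ‖x‖)) : ‖x‖ < ‖y‖ := by
  have hcentre : t * ‖x‖ ≤ ‖t • x‖ := by
    rw [norm_smul, Real.norm_eq_abs]
    gcongr
    exact le_abs_self t
  have htriangle : ‖t • x‖ - ‖y‖ ≤ ‖y - t • x‖ := by
    simpa only [norm_sub_rev] using norm_sub_norm_le (t • x) y
  linarith [mem_ball_iff_norm.mp hy]

lemma one_lt_of_mem_ball_smul (hy : y ∈ ball (t • x) ((t - 1) * ‖x‖)) : 1 < t :=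
  sub_pos.mp (pos_of_mul_pos_left (pos_of_mem_ball hy) (norm_nonneg x))

lemma norm_lt_mul_norm_of_mem_ball_smul (hy : y ∈ ball (t • x) ((t - 1) * ‖x‖)) :
    ‖y‖ < (2 * t - 1) * ‖x‖ := by
  have ht : 0 ≤ t := zero_le_one.trans (one_lt_of_mem_ball_smul hy).le
  have hcentre : ‖t • x‖ = t * ‖x‖ := norm_smul_of_nonneg ht x
  have htriangle : ‖y‖ - ‖t • x‖ ≤ ‖y - t • x‖ := norm_sub_norm_le y (t • x)
  linarith [mem_ball_iff_norm.mp hy]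

lemma mul_norm_le_radius_of_mem_ball_smul (hκ : 1 < κ) (ht : κ ≤ t)
    (hy : y ∈ ball (t • x) ((t - 1) * ‖x‖)) :
    (κ - 1) / (2 * κ - 1) * ‖y‖ ≤ (t - 1) * ‖x‖ := by
  have hratio : (κ - 1) * (2 * t - 1) ≤ (2 * κ - 1) * (t - 1) := by linarith
  rw [div_mul_eq_mul_div, div_le_iff₀' (by linarith)]
  calc (κ - 1) * ‖y‖ ≤ (κ - 1) * ((2 * t - 1) * ‖x‖) :=
        mul_le_mul_of_nonneg_left (norm_lt_mul_norm_of_mem_ball_smul hy).le (by linarith)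
    _ = (κ - 1) * (2 * t - 1) * ‖x‖ := by ring
    _ ≤ (2 * κ - 1) * (t - 1) * ‖x‖ := by gcongr
    _ = (2 * κ - 1) * ((t - 1) * ‖x‖) := by ring

end Geometry

section ProperSpace

variable {X : Type*} [PseudoMetricSpace X] [ProperSpace X] [MeasurableSpace X] (μ : Measure X)
  [IsFiniteMeasureOnCompacts μ]

lemma measureReal_ball_pos_s15 [μ.IsOpenPosMeasure] (x : X) {r : ℝ} (hr : 0 < r) :
    0 < μ.real (ball x r) :=
  ENNReal.toReal_pos (measure_ball_pos μ x hr).ne' measure_ball_ne_top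

lemma integrable_indicator_ball_const [OpensMeasurableSpace X] (a : X) (R K : ℝ) :
    Integrable ((ball a R).indicator fun _ => K) μ :=
  (integrable_indicator_iff measurableSet_ball).mpr (integrableOn_const measure_ball_ne_top)

end ProperSpace

section BallKernel

variable {X : Type*} [PseudoMetricSpace X] [MeasurableSpace X]

/-- The normalised characteristic function `χ_B(y) / μ(B)` of the ball `B = B(z, r)`, with values
in `ℝ`. It is `0` when `μ(B)` is `0` or infinite. -/
def ballKernel (μ : Measure X) (z : X) (r : ℝ) (y : X) : ℝ :=
  (ball z r).indicator (fun _ => (1 : ℝ)) y / μ.real (ball z r)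

lemma ballKernel_nonneg (μ : Measure X) (z : X) (r : ℝ) (y : X) : 0 ≤ ballKernel μ z r y :=
  div_nonneg (Set.indicator_nonneg (fun _ _ => zero_le_one) y) measureReal_nonneg

variable [OpensMeasurableSpace X] [SecondCountableTopology X]
  {α : Type*} [MeasurableSpace α] {z : α → X} {r : α → ℝ}

lemma measurable_measure_ball (μ : Measure X) [SFinite μ] (hz : Measurable z) (hr : Measurable r) :
    Measurable fun a => μ (ball (z a) (r a)) :=
  measurable_measure_prodMk_left (s := {p : α × X | dist p.2 (z p.1) < r p.1}) <|
    measurableSet_lt (measurable_snd.dist (hz.comp measurable_fst)) (hr.comp measurable_fst)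

lemma measurable_ballKernel (μ : Measure X) [SFinite μ] (hz : Measurable z) (hr : Measurable r)
    (y : X) : Measurable fun a => ballKernel μ (z a) (r a) y := by
  have hmem : MeasurableSet {a | y ∈ ball (z a) (r a)} :=
    measurableSet_lt (measurable_const.dist hz) hr
  exact (measurable_const.indicator hmem).div (measurable_measure_ball μ hz hr).ennreal_toReal

end BallKernel

section AddHaar

variable {F : Type*} [NormedAddCommGroup F] [NormedSpace ℝ F] [FiniteDimensional ℝ F]
  [MeasurableSpace F] [BorelSpace F] (μ : Measure F) [μ.IsAddHaarMeasure]

lemma addHaar_real_ball_mul_of_pos (x : F) {t : ℝ} (ht : 0 < t) (r : ℝ) :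
    μ.real (ball x (t * r)) = t ^ Module.finrank ℝ F * μ.real (ball 0 r) := by
  rw [measureReal_def, Measure.addHaar_ball_mul_of_pos μ x ht, ENNReal.toReal_mul,
    ENNReal.toReal_ofReal (by positivity), measureReal_def]

lemma ballKernel_le_inv_measureReal_ball {z y : F} {r ρ : ℝ} (hρ : 0 < ρ) (hr : ρ ≤ r) :
    ballKernel μ z r y ≤ (μ.real (ball 0 ρ))⁻¹ := by
  have hpos : 0 < μ.real (ball (0 : F) ρ) := measureReal_ball_pos_s15 μ 0 hρ
  rw [ballKernel, ← one_div, Measure.addHaar_real_ball_center μ z]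
  gcongr
  · exact Set.indicator_le_self' (fun _ _ => zero_le_one) y
  · exact measure_ball_ne_top

lemma ballKernel_le_indicator {s : Set F} {x z y : F} {r ρ : ℝ} (hρ : 0 < ρ)
    (h : y ∈ ball z r → x ∈ s ∧ ρ ≤ r) :
    ballKernel μ z r y ≤ s.indicator (fun _ => (μ.real (ball 0 ρ))⁻¹) x := by
  by_cases hy : y ∈ ball z r
  · obtain ⟨hx, hr⟩ := h hy
    rw [Set.indicator_of_mem hx]
    exact ballKernel_le_inv_measureReal_ball μ hρ hr
  · rw [ballKernel, Set.indicator_of_notMem hy, zero_div]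
    exact Set.indicator_nonneg (fun _ _ => inv_nonneg.mpr measureReal_nonneg) x

variable {E : Set F} {z : F → F} {r : F → ℝ} {a y : F} {R ρ : ℝ}

lemma integrableOn_ballKernel (hE : MeasurableSet E) (hz : Measurable z) (hr : Measurable r)
    (hρ : 0 < ρ) (h : ∀ x ∈ E, y ∈ ball (z x) (r x) → x ∈ ball a R ∧ ρ ≤ r x) :
    IntegrableOn (fun x => ballKernel μ (z x) (r x) y) E μ := by
  refine (integrable_indicator_ball_const μ a R (μ.real (ball 0 ρ))⁻¹).integrableOn.mono'
    (measurable_ballKernel μ hz hr y).aestronglyMeasurable ?_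
  filter_upwards [ae_restrict_mem hE] with x hx
  rw [Real.norm_of_nonneg (ballKernel_nonneg μ _ _ y)]
  exact ballKernel_le_indicator μ hρ (h x hx)

lemma setIntegral_ballKernel_le (hE : MeasurableSet E) (hz : Measurable z) (hr : Measurable r)
    (hR : 0 < R) (hρ : 0 < ρ)
    (h : ∀ x ∈ E, y ∈ ball (z x) (r x) → x ∈ ball a R ∧ ρ ≤ r x) :
    ∫ x in E, ballKernel μ (z x) (r x) y ∂μ ≤ (R / ρ) ^ Module.finrank ℝ F := by
  set K : ℝ := (μ.real (ball (0 : F) ρ))⁻¹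
  have hdom := integrable_indicator_ball_const μ a R K
  have hK : 0 ≤ K := inv_nonneg.mpr measureReal_nonneg
  calc ∫ x in E, ballKernel μ (z x) (r x) y ∂μ
      ≤ ∫ x in E, (ball a R).indicator (fun _ => K) x ∂μ :=
        setIntegral_mono_on (integrableOn_ballKernel μ hE hz hr hρ h) hdom.integrableOn hE
          fun x hx => ballKernel_le_indicator μ hρ (h x hx)
    _ ≤ ∫ x, (ball a R).indicator (fun _ => K) x ∂μ :=
        setIntegral_le_integral hdom
          (Eventually.of_forall (Set.indicator_nonneg fun _ _ => hK))
    _ = μ.real (ball a (R / ρ * ρ)) * K := by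
        rw [integral_indicator_const K measurableSet_ball, smul_eq_mul, div_mul_cancel₀ R hρ.ne']
    _ = (R / ρ) ^ Module.finrank ℝ F := by
        rw [addHaar_real_ball_mul_of_pos μ a (div_pos hR hρ),
          mul_inv_cancel_right₀ (measureReal_ball_pos_s15 μ 0 hρ).ne']

theorem stmt15_general {κ : ℝ} (hκ : 1 < κ) (hE : MeasurableSet E) {c : F → ℝ}
    (hc : Measurable c) (hcκ : ∀ x ∈ E, κ ≤ c x) (hy : y ≠ 0) :
    IntegrableOn (fun x => ballKernel μ (c x • x) ((c x - 1) * ‖x‖) y) E μ ∧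
      ∫ x in E, ballKernel μ (c x • x) ((c x - 1) * ‖x‖) y ∂μ ≤
        ((2 * κ - 1) / (κ - 1)) ^ Module.finrank ℝ F ∧
      ∀ x ∈ E, y ∈ ball (c x • x) ((c x - 1) * ‖x‖) →
        ‖x‖ < ‖y‖ ∧ (κ - 1) / (2 * κ - 1) * ‖y‖ ≤ (c x - 1) * ‖x‖ := by
  have hball : ∀ x ∈ E, y ∈ ball (c x • x) ((c x - 1) * ‖x‖) →
      ‖x‖ < ‖y‖ ∧ (κ - 1) / (2 * κ - 1) * ‖y‖ ≤ (c x - 1) * ‖x‖ := fun x hx hxy =>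
    ⟨norm_lt_norm_of_mem_ball_smul hxy, mul_norm_le_radius_of_mem_ball_smul hκ (hcκ x hx) hxy⟩
  have hsupp : ∀ x ∈ E, y ∈ ball (c x • x) ((c x - 1) * ‖x‖) →
      x ∈ ball 0 ‖y‖ ∧ (κ - 1) / (2 * κ - 1) * ‖y‖ ≤ (c x - 1) * ‖x‖ := by
    simpa only [mem_ball_zero_iff] using hball
  have hy₀ : 0 < ‖y‖ := norm_pos_iff.mpr hy
  have hρ : 0 < (κ - 1) / (2 * κ - 1) * ‖y‖ :=
    mul_pos (div_pos (by linarith) (by linarith)) hy₀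
  have hratio : ‖y‖ / ((κ - 1) / (2 * κ - 1) * ‖y‖) = (2 * κ - 1) / (κ - 1) := by
    rw [div_mul_cancel_right₀ hy₀.ne', inv_div]
  have hz : Measurable fun x => c x • x := hc.smul measurable_id
  have hr : Measurable fun x => (c x - 1) * ‖x‖ := (hc.sub_const 1).mul measurable_norm
  refine ⟨integrableOn_ballKernel μ hE hz hr hρ hsupp, ?_, hball⟩
  simpa only [hratio] using setIntegral_ballKernel_le μ hE hz hr hy₀ hρ hsupp

end AddHaar

theorem stmt15 (n : ℕ) :
    ∃ C : ℝ, 0 < C ∧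
      ∀ (E : Set (EuclideanSpace ℝ (Fin n))), MeasurableSet E →
        E ⊆ {x | x ≠ 0} →
        ∀ (c : EuclideanSpace ℝ (Fin n) → ℝ), Measurable c →
        (∀ x ∈ E, 5 / 4 < c x) →
        ∀ (y : EuclideanSpace ℝ (Fin n)), y ≠ 0 →
        ((∫ x in E,
            (Set.indicator (ball (c x • x) ((c x - 1) * ‖x‖)) (fun _ => (1 : ℝ)) y) /
              (volume (ball (c x • x) ((c x - 1) * ‖x‖))).toReal) ≤ C) ∧
        (∀ x ∈ E, ‖y‖ < ‖x‖ → y ∉ ball (c x • x) ((c x - 1) * ‖x‖)) ∧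
        (∀ x ∈ E, y ∈ ball (c x • x) ((c x - 1) * ‖x‖) → ‖x‖ ≤ ‖y‖ →
          ‖y‖ / 8 ≤ (c x - 1) * ‖x‖) := by
  refine ⟨6 ^ n, by positivity, fun E hE _ c hc hc5 y hy => ?_⟩
  obtain ⟨-, hint, hball⟩ :=
    stmt15_general volume (κ := 5 / 4) (by norm_num) hE hc (fun x hx => (hc5 x hx).le) hy
  norm_num only [finrank_euclideanSpace_fin] at hint hball
  refine ⟨hint, fun x hx hlt hxy => (hball x hx hxy).1.not_gt hlt, fun x hx hxy _ => ?_⟩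
  linarith [(hball x hx hxy).2, norm_nonneg y]
end
end

section
/- Let n ≥ 1, 0 < β < n, let f : ℝⁿ → ℝ be locally integrable, and let B_0 = B(z_0,r_0) ∈ ℬ_{x_0} and B_1 = B(z_1,r_1) ∈ ℬ_{x_1} be best balls (for some points x_0, x_1). Suppose that ⨍_{B_0} |f| > 0, that B(z_0, 2r_0) ∩ B(z_1, 2r_1) ≠ ∅, and that (1/4) ⨍_{B_0} |f| ≤ ⨍_{B_1} |f| ≤ 4 ⨍_{B_0} |f|. Then 8^{−(n+1)/β} ≤ r_0/r_1 ≤ 8^{(n+1)/β}. -/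
open MeasureTheory Metric Filter
open scoped Topology

noncomputable section

/-!
Suppose `r₁ ≤ r₀`. Since the doubled balls meet, the dilate `B(z₀, 5r₀)` reaches `x₁`, so it
competes with the best ball `B(z₁, r₁)` in the definition of `M_β f(x₁)`. Its average is at least
`5⁻ⁿ` times the average over `B(z₀, r₀)`, which in turn is at least a quarter of the average over
`B(z₁, r₁)`. Comparing the two competitors gives `(5r₀) ^ β ≤ 4 * 5ⁿ * r₁ ^ β`. The hypotheses are
symmetric in the two balls, so exchanging them gives the other bound.
-/

theorem setAverage_le_mul_setAverage_of_subset {α : Type*} [MeasurableSpace α] {μ : Measure α}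
    {s t : Set α} {g : α → ℝ} (hst : s ⊆ t) (ht : μ t ≠ ⊤) (hg : IntegrableOn g t μ)
    (hg_nonneg : 0 ≤ᵐ[μ.restrict t] g) :
    ⨍ y in s, g y ∂μ ≤ μ.real t / μ.real s * ⨍ y in t, g y ∂μ := by
  calc ⨍ y in s, g y ∂μ = (μ.real s)⁻¹ * ∫ y in s, g y ∂μ := setAverage_eq μ g s
    _ ≤ (μ.real s)⁻¹ * ∫ y in t, g y ∂μ :=
      mul_le_mul_of_nonneg_left (setIntegral_mono_set hg hg_nonneg hst.eventuallyLE)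
        (inv_nonneg.2 measureReal_nonneg)
    _ = (μ.real s)⁻¹ * (μ.real t * ⨍ y in t, g y ∂μ) := by
      rw [← smul_eq_mul (μ.real t), measure_smul_setAverage g ht]
    _ = μ.real t / μ.real s * ⨍ y in t, g y ∂μ := by ring

theorem mem_closedBall_of_ball_inter_ball_nonempty {X : Type*} [PseudoMetricSpace X]
    {x z₀ z₁ : X} {a r₀ r₁ : ℝ} (ha : 0 ≤ a) (hr : r₁ ≤ r₀)
    (hmeet : (ball z₀ (a * r₀) ∩ ball z₁ (a * r₁)).Nonempty) (hx : x ∈ closedBall z₁ r₁) :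
    x ∈ closedBall z₀ ((2 * a + 1) * r₀) := by
  have hcenters : dist z₁ z₀ < a * r₁ + a * r₀ := by
    rw [dist_comm, add_comm]
    exact dist_lt_add_of_nonempty_ball_inter_ball hmeet
  rw [mem_closedBall] at hx ⊢
  calc dist x z₀ ≤ dist x z₁ + dist z₁ z₀ := dist_triangle x z₁ z₀
    _ ≤ r₁ + (a * r₁ + a * r₀) := add_le_add hx hcenters.le
    _ ≤ r₀ + (a * r₀ + a * r₀) := by gcongr
    _ = (2 * a + 1) * r₀ := by ring

/-- The ball `B(z, r)` attains the supremum defining the non-centered fractional maximal function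
`M_β f(x)` with respect to `μ`. This is the notion of a best ball in a metric measure space, for
vector-valued `f`; maximality is expressed by comparison with every competitor, because a real
`sSup` takes the value `0` on unbounded sets. -/
structure IsExtremalBall {X F : Type*} [PseudoMetricSpace X] [MeasurableSpace X]
    [NormedAddCommGroup F] (μ : Measure X) (β : ℝ) (f : X → F) (x z : X) (r : ℝ) : Prop where
  radius_pos : 0 < r
  mem_closedBall : x ∈ closedBall z r
  le_of_mem_closedBall : ∀ ⦃z' : X⦄ ⦃r' : ℝ⦄, 0 < r' → x ∈ closedBall z' r' →
    r' ^ β * ⨍ y in ball z' r', ‖f y‖ ∂μ ≤ r ^ β * ⨍ y in ball z r, ‖f y‖ ∂μ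

theorem IsBestBall.isExtremalBall {n : ℕ} {β : ℝ} {f : EuclideanSpace ℝ (Fin n) → ℝ}
    {x z : EuclideanSpace ℝ (Fin n)} {r : ℝ} (h : IsBestBall β f x z r)
    (hpos : 0 < ⨍ y in ball z r, |f y|) : IsExtremalBall volume β f x z r := by
  obtain ⟨hr, hx, hmax⟩ := h
  have hmax_pos : 0 < fracMax β f x := hmax ▸ mul_pos (Real.rpow_pos_of_pos hr β) hpos
  have hbdd : BddAbove (maxSet β f x) := by
    by_contra hunbdd
    exact hmax_pos.ne' (Real.sSup_of_not_bddAbove hunbdd)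
  exact ⟨hr, hx, fun z' r' hr' hx' => hmax ▸ le_csSup hbdd ⟨z', r', hr', hx', rfl⟩⟩

section NormedSpace

open Module (finrank)

variable {E F : Type*} [NormedAddCommGroup E] [NormedSpace ℝ E] [FiniteDimensional ℝ E]
  [MeasurableSpace E] [BorelSpace E] [NormedAddCommGroup F] {μ : Measure E} [μ.IsAddHaarMeasure]
  {f : E → F} {β a K : ℝ} {x₀ x₁ z₀ z₁ : E} {r₀ r₁ : ℝ}

theorem setAverage_norm_ball_le (hf : LocallyIntegrable f μ) {c : ℝ} (hc : 1 ≤ c) (z : E) {r : ℝ}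
    (hr : 0 ≤ r) :
    ⨍ y in ball z r, ‖f y‖ ∂μ ≤ c ^ finrank ℝ E * ⨍ y in ball z (c * r), ‖f y‖ ∂μ := by
  have hc_pos : 0 < c := one_pos.trans_le hc
  have hvol : μ.real (ball z (c * r)) = c ^ finrank ℝ E * μ.real (ball z r) := by
    rw [measureReal_def, μ.addHaar_ball_mul_of_pos z hc_pos, ← μ.addHaar_ball_center z,
      ENNReal.toReal_mul, ENNReal.toReal_ofReal (by positivity), measureReal_def]
  have hint : IntegrableOn (fun y => ‖f y‖) (ball z (c * r)) μ :=
    ((hf.integrableOn_isCompact (isCompact_closedBall z (c * r))).mono_set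
      ball_subset_closedBall).norm
  have hnonneg : 0 ≤ ⨍ y in ball z (c * r), ‖f y‖ ∂μ := integral_nonneg fun y => norm_nonneg (f y)
  refine (setAverage_le_mul_setAverage_of_subset (ball_subset_ball (le_mul_of_one_le_left hr hc))
    measure_ball_lt_top.ne hint (.of_forall fun y => norm_nonneg (f y))).trans ?_
  gcongr
  exact div_le_of_le_mul₀ measureReal_nonneg (by positivity) hvol.le

theorem IsExtremalBall.rpow_radius_le (h₁ : IsExtremalBall μ β f x₁ z₁ r₁)
    (hf : LocallyIntegrable f μ) (hr : r₁ ≤ r₀)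
    (hmeet : (ball z₀ (a * r₀) ∩ ball z₁ (a * r₁)).Nonempty)
    (hpos : 0 < ⨍ y in ball z₀ r₀, ‖f y‖ ∂μ)
    (hK : ⨍ y in ball z₁ r₁, ‖f y‖ ∂μ ≤ K * ⨍ y in ball z₀ r₀, ‖f y‖ ∂μ) :
    ((2 * a + 1) * r₀) ^ β ≤ K * (2 * a + 1) ^ finrank ℝ E * r₁ ^ β := by
  have hr₁ : 0 < r₁ := h₁.radius_pos
  have hr₀ : 0 < r₀ := hr₁.trans_le hr
  have ha : 0 < a := pos_of_mul_pos_left (nonempty_ball.1 hmeet.right) hr₁.le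
  have hcompetitor := h₁.le_of_mem_closedBall (by positivity)
    (mem_closedBall_of_ball_inter_ball_nonempty ha.le hr hmeet h₁.mem_closedBall)
  have hdilate := setAverage_norm_ball_le hf (c := 2 * a + 1) (by linarith) z₀ hr₀.le
  set A₀ := ⨍ y in ball z₀ r₀, ‖f y‖ ∂μ
  set A₁ := ⨍ y in ball z₁ r₁, ‖f y‖ ∂μ
  set c := 2 * a + 1
  refine le_of_mul_le_mul_right ?_ hpos
  calc (c * r₀) ^ β * A₀
      ≤ (c * r₀) ^ β * (c ^ finrank ℝ E * ⨍ y in ball z₀ (c * r₀), ‖f y‖ ∂μ) := by gcongr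
    _ = c ^ finrank ℝ E * ((c * r₀) ^ β * ⨍ y in ball z₀ (c * r₀), ‖f y‖ ∂μ) := by ring
    _ ≤ c ^ finrank ℝ E * (r₁ ^ β * A₁) := by gcongr
    _ ≤ c ^ finrank ℝ E * (r₁ ^ β * (K * A₀)) := by gcongr
    _ = K * c ^ finrank ℝ E * r₁ ^ β * A₀ := by ring

theorem IsExtremalBall.radius_div_le (h₁ : IsExtremalBall μ β f x₁ z₁ r₁) (hβ : 0 < β)
    (hf : LocallyIntegrable f μ) (hmeet : (ball z₀ (a * r₀) ∩ ball z₁ (a * r₁)).Nonempty)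
    (hpos : 0 < ⨍ y in ball z₀ r₀, ‖f y‖ ∂μ) (hK_one : 1 ≤ K)
    (hK : ⨍ y in ball z₁ r₁, ‖f y‖ ∂μ ≤ K * ⨍ y in ball z₀ r₀, ‖f y‖ ∂μ) :
    r₀ / r₁ ≤ (K * (2 * a + 1) ^ finrank ℝ E) ^ β⁻¹ := by
  have hr₁ : 0 < r₁ := h₁.radius_pos
  have ha : 0 < a := pos_of_mul_pos_left (nonempty_ball.1 hmeet.right) hr₁.le
  have hr₀ : 0 < r₀ := pos_of_mul_pos_right (nonempty_ball.1 hmeet.left) ha.le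
  have hc : 1 ≤ 2 * a + 1 := by linarith
  rcases le_total r₀ r₁ with hle | hle
  · calc r₀ / r₁ ≤ 1 := div_le_one_of_le₀ hle hr₁.le
      _ ≤ (K * (2 * a + 1) ^ finrank ℝ E) ^ β⁻¹ :=
        Real.one_le_rpow (one_le_mul_of_one_le_of_one_le hK_one (one_le_pow₀ hc)) (by positivity)
  · rw [Real.le_rpow_inv_iff_of_pos (by positivity) (by positivity) hβ,
      Real.div_rpow hr₀.le hr₁.le, div_le_iff₀ (by positivity)]
    calc r₀ ^ β ≤ ((2 * a + 1) * r₀) ^ β := by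
          gcongr
          exact le_mul_of_one_le_left hr₀.le hc
      _ ≤ K * (2 * a + 1) ^ finrank ℝ E * r₁ ^ β := h₁.rpow_radius_le hf hle hmeet hpos hK

theorem IsExtremalBall.radius_div_le_eight_rpow (h₁ : IsExtremalBall μ β f x₁ z₁ r₁) (hβ : 0 < β)
    (hf : LocallyIntegrable f μ) (hmeet : (ball z₀ (2 * r₀) ∩ ball z₁ (2 * r₁)).Nonempty)
    (hpos : 0 < ⨍ y in ball z₀ r₀, ‖f y‖ ∂μ)
    (hhigh : ⨍ y in ball z₁ r₁, ‖f y‖ ∂μ ≤ 4 * ⨍ y in ball z₀ r₀, ‖f y‖ ∂μ) :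
    r₀ / r₁ ≤ (8 : ℝ) ^ (((finrank ℝ E : ℝ) + 1) / β) := by
  calc r₀ / r₁ ≤ (4 * (2 * 2 + 1) ^ finrank ℝ E) ^ β⁻¹ :=
        h₁.radius_div_le hβ hf hmeet hpos (by norm_num) hhigh
    _ ≤ (8 * 8 ^ finrank ℝ E) ^ β⁻¹ := by gcongr <;> norm_num
    _ = (8 : ℝ) ^ (((finrank ℝ E : ℝ) + 1) / β) := by
      rw [← pow_succ', ← Real.rpow_natCast_mul (by norm_num), Nat.cast_succ, div_eq_mul_inv]

theorem stmt16_general (hβ : 0 < β) (hf : LocallyIntegrable f μ)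
    (h₀ : IsExtremalBall μ β f x₀ z₀ r₀) (h₁ : IsExtremalBall μ β f x₁ z₁ r₁)
    (hpos : 0 < ⨍ y in ball z₀ r₀, ‖f y‖ ∂μ)
    (hmeet : (ball z₀ (2 * r₀) ∩ ball z₁ (2 * r₁)).Nonempty)
    (hlow : (1 / 4) * (⨍ y in ball z₀ r₀, ‖f y‖ ∂μ) ≤ ⨍ y in ball z₁ r₁, ‖f y‖ ∂μ)
    (hhigh : (⨍ y in ball z₁ r₁, ‖f y‖ ∂μ) ≤ 4 * ⨍ y in ball z₀ r₀, ‖f y‖ ∂μ) :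
    (8 : ℝ) ^ (-((finrank ℝ E : ℝ) + 1) / β) ≤ r₀ / r₁ ∧
      r₀ / r₁ ≤ (8 : ℝ) ^ (((finrank ℝ E : ℝ) + 1) / β) := by
  refine ⟨?_, h₁.radius_div_le_eight_rpow hβ hf hmeet hpos hhigh⟩
  have hswap : r₁ / r₀ ≤ (8 : ℝ) ^ (((finrank ℝ E : ℝ) + 1) / β) :=
    h₀.radius_div_le_eight_rpow hβ hf (Set.inter_comm _ _ ▸ hmeet) (by linarith) (by linarith)
  rw [neg_div, Real.rpow_neg (by norm_num), ← inv_div r₁ r₀]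
  exact inv_anti₀ (div_pos h₁.radius_pos h₀.radius_pos) hswap

end NormedSpace

theorem stmt16 (n : ℕ) (hn : 1 ≤ n) (β : ℝ) (hβ0 : 0 < β) (hβn : β < n)
    (f : EuclideanSpace ℝ (Fin n) → ℝ) (hf : LocallyIntegrable f)
    (x₀ x₁ z₀ z₁ : EuclideanSpace ℝ (Fin n)) (r₀ r₁ : ℝ)
    (hB₀ : IsBestBall β f x₀ z₀ r₀) (hB₁ : IsBestBall β f x₁ z₁ r₁)
    (hpos : 0 < ⨍ y in ball z₀ r₀, |f y|)
    (hmeet : (ball z₀ (2 * r₀) ∩ ball z₁ (2 * r₁)).Nonempty)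
    (hlow : (1 / 4) * (⨍ y in ball z₀ r₀, |f y|) ≤ ⨍ y in ball z₁ r₁, |f y|)
    (hhigh : (⨍ y in ball z₁ r₁, |f y|) ≤ 4 * ⨍ y in ball z₀ r₀, |f y|) :
    (8 : ℝ) ^ (-((n : ℝ) + 1) / β) ≤ r₀ / r₁ ∧
      r₀ / r₁ ≤ (8 : ℝ) ^ (((n : ℝ) + 1) / β) := by
  simpa only [finrank_euclideanSpace_fin] using stmt16_general hβ0 hf (hB₀.isExtremalBall hpos)
    (hB₁.isExtremalBall (by linarith)) hpos hmeet hlow hhigh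
end
end

section
/- Let n ≥ 1, 0 ≤ β < n, let f : ℝⁿ → ℝ be locally integrable, and let x ∈ ℝⁿ with M_β f(x) < ∞. If B(z_k, r_k) ∈ ℬ_x for every k ∈ ℕ and z_k → z ∈ ℝⁿ, r_k → r ∈ (0,∞) as k → ∞, then B(z,r) ∈ ℬ_x; that is, limits of best balls at x (with radii converging in (0,∞)) are best balls at x. -/
open MeasureTheory Metric Filter
open scoped Topology

noncomputable section

/-!
The map `(z, r) ↦ r ^ β ⨍_{B(z,r)} |f|` is continuous at every positive radius: if `(w, s)` tends to
`(z, r)`, the indicator of `B(w,s)` tends to that of `B(z,r)` off the sphere of `B(z,r)`, which is a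
null set, so dominated convergence applies. A best ball is a point where this map attains its
maximum over the balls whose closure contains `x`, and maximality as well as membership of `x` in
the closed ball are preserved by limits of the centre and the radius.
-/

theorem isMaxOn_of_mem_closure {α γ : Type*} [TopologicalSpace α] [TopologicalSpace γ] [Preorder γ]
    [ClosedIciTopology γ] {g : α → γ} {s : Set α} {a : α}
    (ha : a ∈ closure {b | IsMaxOn g s b}) (hg : ContinuousAt g a) : IsMaxOn g s a :=
  fun _ hc ↦ isClosed_Ici.mem_of_frequently_of_tendsto
    ((mem_closure_iff_frequently.1 ha).mono fun _ hb ↦ hb hc) hg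

section Metric

variable {X : Type*} [PseudoMetricSpace X]

theorem eventually_ball_subset_closedBall {z : X} {r R : ℝ} (hrR : r < R) :
    ∀ᶠ p : X × ℝ in 𝓝 (z, r), ball p.1 p.2 ⊆ closedBall z R := by
  have hcont : Continuous fun p : X × ℝ ↦ p.2 + dist p.1 z := by fun_prop
  filter_upwards [hcont.continuousAt.eventually_lt_const (by simpa using hrR)] with p hp
  exact ball_subset_closedBall.trans (closedBall_subset_closedBall' hp.le)

theorem eventually_mem_ball_iff {y z : X} {r : ℝ} (hy : y ∉ sphere z r) :
    ∀ᶠ p : X × ℝ in 𝓝 (z, r), y ∈ ball p.1 p.2 ↔ y ∈ ball z r := by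
  have hdist : ContinuousAt (fun p : X × ℝ ↦ dist y p.1) (z, r) := by fun_prop
  rcases lt_or_gt_of_ne (show dist y z ≠ r from hy) with hlt | hgt
  · filter_upwards [hdist.eventually_lt continuousAt_snd hlt] with p hp
    exact iff_of_true hp hlt
  · filter_upwards [continuousAt_snd.eventually_lt hdist hgt] with p hp
    exact iff_of_false hp.not_gt hgt.not_gt

theorem isClosed_setOf_mem_closedBall (x : X) :
    IsClosed {p : X × ℝ | x ∈ closedBall p.1 p.2} :=
  isClosed_le (by fun_prop) continuous_snd

/-- The pairs `(z, r)` such that `B(z, r)` competes in the supremum defining `M_β f x`; balls are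
encoded by centre and radius so that their limits are limits in `X × ℝ`. -/
def ballsAt (x : X) : Set (X × ℝ) :=
  {p | 0 < p.2 ∧ x ∈ closedBall p.1 p.2}

end Metric

section Measure

variable {X E : Type*} [PseudoMetricSpace X] [MeasurableSpace X] [NormedAddCommGroup E]

/-- The quantity `r ^ β ⨍_{B(z,r)} ‖f‖ dμ`, as a function of the pair `p = (z, r)`, whose supremum
over `ballsAt x` is `M_β f x`. -/
def fracAverage (μ : Measure X) (β : ℝ) (f : X → E) (p : X × ℝ) : ℝ :=
  p.2 ^ β * ⨍ y in ball p.1 p.2, ‖f y‖ ∂μ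

/-- The set `ℬ_x` of best balls at `x`, as pairs `(z, r)`. It is defined by maximality rather than
through the value `M_β f x`, so that it has no junk elements when the supremum is infinite. -/
def bestBalls (μ : Measure X) (β : ℝ) (f : X → E) (x : X) : Set (X × ℝ) :=
  {p ∈ ballsAt x | IsMaxOn (fracAverage μ β f) (ballsAt x) p}

variable [OpensMeasurableSpace X] [ProperSpace X] {μ : Measure X} {f : X → E}
  {z : X} {r : ℝ}

theorem continuousAt_setIntegral_ball [NormedSpace ℝ E] (hf : LocallyIntegrable f μ)
    (hnull : μ (sphere z r) = 0) :
    ContinuousAt (fun p : X × ℝ ↦ ∫ y in ball p.1 p.2, f y ∂μ) (z, r) := by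
  simp_rw [← integral_indicator measurableSet_ball]
  refine continuousAt_of_dominated (bound := (closedBall z (r + 1)).indicator fun y ↦ ‖f y‖)
    (.of_forall fun p ↦ hf.aestronglyMeasurable.indicator measurableSet_ball)
    ?bound ?integrable ?lim
  case bound =>
    filter_upwards [eventually_ball_subset_closedBall (lt_add_one r)] with p hp
    refine .of_forall fun y ↦ ?_
    rw [norm_indicator_eq_indicator_norm]
    exact Set.indicator_le_indicator_of_subset hp (fun _ ↦ norm_nonneg _) y
  case integrable =>
    exact (integrable_indicator_iff measurableSet_closedBall).2
      (hf.integrableOn_isCompact (isCompact_closedBall z (r + 1))).norm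
  case lim =>
    filter_upwards [measure_eq_zero_iff_ae_notMem.1 hnull] with y hy
    refine continuousAt_const.congr (f := fun _ ↦ (ball z r).indicator f y) ?_
    filter_upwards [eventually_mem_ball_iff hy] with p hp
    exact Set.indicator_eq_indicator hp.symm rfl

variable [IsFiniteMeasureOnCompacts μ] [μ.IsOpenPosMeasure]

theorem continuousAt_setAverage_ball [NormedSpace ℝ E] (hf : LocallyIntegrable f μ) (hr : 0 < r)
    (hnull : μ (sphere z r) = 0) :
    ContinuousAt (fun p : X × ℝ ↦ ⨍ y in ball p.1 p.2, f y ∂μ) (z, r) := by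
  have hvol : ContinuousAt (fun p : X × ℝ ↦ μ.real (ball p.1 p.2)) (z, r) := by
    simpa only [setIntegral_const, smul_eq_mul, mul_one] using
      continuousAt_setIntegral_ball (locallyIntegrable_const (1 : ℝ)) hnull
  have hpos : 0 < μ.real (ball z r) :=
    ENNReal.toReal_pos (measure_ball_pos μ z hr).ne' measure_ball_lt_top.ne
  simp_rw [setAverage_eq]
  exact (hvol.inv₀ hpos.ne').smul (continuousAt_setIntegral_ball hf hnull)

theorem continuousAt_fracAverage (β : ℝ) (hf : LocallyIntegrable f μ) (hr : 0 < r)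
    (hnull : μ (sphere z r) = 0) : ContinuousAt (fracAverage μ β f) (z, r) :=
  (continuousAt_snd.rpow_const (.inl hr.ne')).mul
    (continuousAt_setAverage_ball (fun x ↦ (hf x).norm) hr hnull)

theorem stmt17_general {β : ℝ} {x : X} (hf : LocallyIntegrable f μ) (hr : 0 < r)
    (hnull : μ (sphere z r) = 0) (h : (z, r) ∈ closure (bestBalls μ β f x)) :
    (z, r) ∈ bestBalls μ β f x := by
  have hx : (z, r) ∈ {p : X × ℝ | x ∈ closedBall p.1 p.2} :=
    closure_minimal (fun _ hp ↦ hp.1.2) (isClosed_setOf_mem_closedBall x) h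
  exact ⟨⟨hr, hx⟩, isMaxOn_of_mem_closure (closure_mono (fun _ hp ↦ hp.2) h)
    (continuousAt_fracAverage β hf hr hnull)⟩

end Measure

section Euclidean

variable {n : ℕ} {β : ℝ} {f : EuclideanSpace ℝ (Fin n) → ℝ} {x : EuclideanSpace ℝ (Fin n)}

theorem maxSet_eq_image_fracAverage : maxSet β f x = fracAverage volume β f '' ballsAt x := by
  ext t
  constructor
  · rintro ⟨z, r, hr, hx, rfl⟩
    exact ⟨(z, r), ⟨hr, hx⟩, rfl⟩
  · rintro ⟨⟨z, r⟩, ⟨hr, hx⟩, rfl⟩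
    exact ⟨z, r, hr, hx, rfl⟩

theorem isBestBall_iff_mem_bestBalls (hfin : BddAbove (maxSet β f x))
    {z : EuclideanSpace ℝ (Fin n)} {r : ℝ} :
    IsBestBall β f x z r ↔ (z, r) ∈ bestBalls volume β f x := by
  rw [maxSet_eq_image_fracAverage] at hfin
  have hM : fracMax β f x = sSup (fracAverage volume β f '' ballsAt x) :=
    congrArg sSup maxSet_eq_image_fracAverage
  constructor
  · rintro ⟨hr, hx, hbest⟩
    refine ⟨⟨hr, hx⟩, fun p hp ↦ ?_⟩
    calc fracAverage volume β f p ≤ fracMax β f x := hM ▸ le_csSup hfin (Set.mem_image_of_mem _ hp)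
      _ = fracAverage volume β f (z, r) := hbest
  · rintro ⟨hzr, hmax⟩
    have hgreatest : IsGreatest (fracAverage volume β f '' ballsAt x)
        (fracAverage volume β f (z, r)) :=
      ⟨Set.mem_image_of_mem _ hzr, Set.forall_mem_image.2 hmax⟩
    exact ⟨hzr.1, hzr.2, hM.trans hgreatest.csSup_eq⟩

end Euclidean

theorem stmt17 (n : ℕ) (hn : 1 ≤ n) (β : ℝ) (hβ0 : 0 ≤ β) (hβn : β < n)
    (f : EuclideanSpace ℝ (Fin n) → ℝ) (hf : LocallyIntegrable f)
    (x : EuclideanSpace ℝ (Fin n)) (hfin : BddAbove (maxSet β f x))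
    (z : ℕ → EuclideanSpace ℝ (Fin n)) (r : ℕ → ℝ)
    (zlim : EuclideanSpace ℝ (Fin n)) (rlim : ℝ)
    (hB : ∀ k, IsBestBall β f x (z k) (r k))
    (hz : Tendsto z atTop (𝓝 zlim)) (hr : Tendsto r atTop (𝓝 rlim))
    (hrlim : 0 < rlim) :
    IsBestBall β f x zlim rlim := by
  simp only [isBestBall_iff_mem_bestBalls hfin] at hB ⊢
  exact stmt17_general hf hrlim (Measure.addHaar_sphere_of_ne_zero volume zlim hrlim.ne')
    (mem_closure_of_tendsto (hz.prodMk_nhds hr) (.of_forall hB))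
end
end
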